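/- Let k ∈ ℕ₀, 0 < θ < 1/2 and σ > 0. Let B̂ be the ball of maximal radius contained in T̂, with center ẑ and radius r̂, and define η_{B̂}(x) := exp(1/(|x − ẑ|²/r̂² − 1)) if |x − ẑ| < r̂ and η_{B̂}(x) := 0 otherwise. Then there exists a constant C, depending only on θ, k and σ, such that for every invertible affine map F : ℝ² → ℝ² for which the triangle T := F(T̂) has minimum interior angle ≥ σ, setting η_T := η_{B̂} ∘ F^{−1} and h_T := |T|^{1/2}, every polynomial V of total degree ≤ k in two variables satisfies ∫_T V² dx ≤ C · ∫_T V² η_T dx and |∇(V·η_T)|_{θ, int T} ≤ C · h_T^{−1−θ} · ‖V‖_{L²(T)}, where |∇w|_{θ,G} := (|∂₁w|²_{θ,G} + |∂₂w|²_{θ,G})^{1/2}. -/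

import Mathlib

open MeasureTheory Metric Set Filter
open scoped Topology NNReal ENNReal

noncomputable section

abbrev E2 := EuclideanSpace ℝ (Fin 2)

/-- Squared Gagliardo seminorm of order `s` on `G ⊆ ℝ²`. -/
def gagSq (s : ℝ) (G : Set E2) (v : E2 → ℝ) : ℝ :=
  ∫ x in G, ∫ y in G, (v x - v y) ^ 2 / dist x y ^ (2 + 2 * s)

/-- Partial derivative in the `i`-th coordinate direction. -/
def pd (i : Fin 2) (f : E2 → ℝ) (x : E2) : ℝ := fderiv ℝ f x (EuclideanSpace.single i 1)

/-- All interior angles of the triangle `t` are at least `σ`. -/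
def angleLB (σ : ℝ) (t : Fin 3 → E2) : Prop :=
  ∀ i : Fin 3, σ ≤ EuclideanGeometry.angle (t (i + 1)) (t i) (t (i + 2))

/-- The open reference triangle with vertices `(0,0)`, `(1,0)`, `(0,1)`. -/
def refTri : Set E2 := {x : E2 | 0 < x 0 ∧ 0 < x 1 ∧ x 0 + x 1 < 1}

/-- The vertices of the reference triangle. -/
def refVert : Fin 3 → E2 := ![0, EuclideanSpace.single 0 1, EuclideanSpace.single 1 1]

/-- The radius of the maximal ball contained in the reference triangle. -/
def incR : ℝ := 1 - Real.sqrt 2 / 2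

/-- The center of the maximal ball contained in the reference triangle. -/
def incC : E2 := EuclideanSpace.single 0 incR + EuclideanSpace.single 1 incR

open Classical in
/-- The standard bump function of the ball with center `c` and radius `r`:
`x ↦ exp(1/(|x−c|²/r² − 1))` inside the ball and `0` outside. -/
def etaBump (c : E2) (r : ℝ) (x : E2) : ℝ :=
  if dist x c < r then Real.exp (1 / ((dist x c) ^ 2 / r ^ 2 - 1)) else 0

/-- Evaluation of a polynomial in two variables. -/
def pfun (p : MvPolynomial (Fin 2) ℝ) (x : E2) : ℝ := MvPolynomial.eval (fun i => x i) p

/-!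
Polynomials of degree at most `k` are invariant under affine changes of variables and form a
finite-dimensional space, on which every pointwise bounded family of linear maps is controlled by
the `L²` norm on the reference domain. With the weight `√η` in that norm, point evaluations give
`sup |p|² ≲ ∫ p² η`, hence the mass estimate; with the weight `1`, the difference quotients of
`∇(p η)` give a bound for the Lipschitz constant of the gradient.

Pulling back by `F x = A x + b` multiplies this Lipschitz constant by `‖A⁻¹‖²`. The area formula
`sin α · |side| · |side| = |det A|` at the three vertices of `F(T̂)` and the lower bound on the
angles give `‖A⁻¹‖² ≲ 1 / |det A| ≃ 1 / |T|`. For an `L`-Lipschitz function the Gagliardo integrand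
is at most the weakly singular kernel `L² |x - y|^(-2θ)`, whose double integral over `T` is
`≲ L² |T|^(2 - θ)`, uniformly in the shape of `T`; for `L² ≃ |T|⁻³ ‖p‖²` this is the claimed power.
-/

open Module (finrank)

/-! ### Inverse estimates for polynomials on a fixed domain -/

lemma exists_norm_le_mul_norm_of_injective {V W F ι : Type*} [AddCommGroup V] [Module ℝ V]
    [FiniteDimensional ℝ V] [NormedAddCommGroup W] [NormedSpace ℝ W] [NormedAddCommGroup F]
    [NormedSpace ℝ F] {g : V →ₗ[ℝ] W} (hg : Function.Injective g) (f : V →ₗ[ℝ] ι → F)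
    (hf : ∀ v, ∃ C, ∀ i, ‖f v i‖ ≤ C) :
    ∃ C : ℝ, 0 < C ∧ ∀ v i, ‖f v i‖ ≤ C * ‖g v‖ := by
  let e : V ≃ₗ[ℝ] LinearMap.range g := LinearEquiv.ofInjective g hg
  let T (i : ι) : LinearMap.range g →L[ℝ] F :=
    LinearMap.toContinuousLinearMap (LinearMap.proj i ∘ₗ f ∘ₗ e.symm.toLinearMap)
  have : CompleteSpace (LinearMap.range g) := FiniteDimensional.complete ℝ _
  obtain ⟨C, hC⟩ := banach_steinhaus (g := T) fun w => hf (e.symm w)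
  refine ⟨max C 1, by positivity, fun v i => ?_⟩
  have hT : T i (e v) = f v i := congrArg (f · i) (e.symm_apply_apply v)
  rw [← hT]
  exact (T i).le_of_opNorm_le ((hC i).trans (le_max_left _ _)) (e v)

lemma norm_toLp_two_eq_sqrt_integral_sq {α : Type*} [MeasurableSpace α] {μ : Measure α}
    {f : α → ℝ} (hf : MemLp f 2 μ) : ‖hf.toLp f‖ = √(∫ x, f x ^ 2 ∂μ) := by
  rw [Lp.norm_toLp, hf.eLpNorm_eq_integral_rpow_norm two_ne_zero ENNReal.ofNat_ne_top,
    ENNReal.toReal_ofReal (by positivity), Real.sqrt_eq_rpow]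
  simp

lemma exists_norm_le_mul_sqrt_integral_sq {V α F ι : Type*} [AddCommGroup V] [Module ℝ V]
    [FiniteDimensional ℝ V] [MeasurableSpace α] {μ : Measure α} [NormedAddCommGroup F]
    [NormedSpace ℝ F] {g : V →ₗ[ℝ] α → ℝ} (hg : ∀ v, MemLp (g v) 2 μ)
    (hg_inj : ∀ v, g v =ᵐ[μ] 0 → v = 0) (f : V →ₗ[ℝ] ι → F)
    (hf : ∀ v, ∃ C, ∀ i, ‖f v i‖ ≤ C) :
    ∃ C : ℝ, 0 < C ∧ ∀ v i, ‖f v i‖ ≤ C * √(∫ x, g v x ^ 2 ∂μ) := by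
  let G : V →ₗ[ℝ] Lp ℝ 2 μ :=
    { toFun v := (hg v).toLp (g v)
      map_add' u v := by simp only [map_add]; exact MemLp.toLp_add (hg u) (hg v)
      map_smul' c v := by simp only [map_smul]; exact MemLp.toLp_const_smul c (hg v) }
  have hG : Function.Injective G := by
    rw [injective_iff_map_eq_zero]
    exact fun v hv => hg_inj v <| (hg v).toLp_eq_toLp_iff MemLp.zero |>.1 hv
  obtain ⟨C, hC, hfC⟩ := exists_norm_le_mul_norm_of_injective hG f hf
  refine ⟨C, hC, fun v i => (hfC v i).trans_eq ?_⟩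
  rw [← norm_toLp_two_eq_sqrt_integral_sq (hg v)]
  rfl

lemma memLp_restrict_of_continuous {X : Type*} [PseudoMetricSpace X] [ProperSpace X]
    [MeasurableSpace X] [OpensMeasurableSpace X] {μ : Measure X} [IsFiniteMeasureOnCompacts μ]
    {Ω : Set X} (hΩ : Bornology.IsBounded Ω) {f : X → ℝ} (hf : Continuous f) (p : ℝ≥0∞) :
    MemLp f p (μ.restrict Ω) := by
  have hcpt := hΩ.isCompact_closure
  obtain ⟨C, hC⟩ := hcpt.exists_bound_of_continuousOn hf.continuousOn
  have : IsFiniteMeasure (μ.restrict (closure Ω)) :=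
    isFiniteMeasure_restrict.2 hcpt.measure_lt_top.ne
  refine MemLp.mono_measure (Measure.restrict_mono_set μ subset_closure) ?_
  exact .of_bound hf.aestronglyMeasurable C
    (ae_restrict_of_forall_mem isClosed_closure.measurableSet hC)

section PolyMul

variable {ι : Type*}

/-- The linear map `p ↦ p * w` sending a polynomial to its polynomial function on `ℝ^ι`,
multiplied by the weight `w`. With `w = 1` it yields the polynomial functions themselves, with a
cutoff function `w` their truncations. -/
def polyMul (w : EuclideanSpace ℝ ι → ℝ) :
    MvPolynomial ι ℝ →ₗ[ℝ] EuclideanSpace ℝ ι → ℝ where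
  toFun p x := MvPolynomial.eval x.ofLp p * w x
  map_add' p q := by ext x; simp [add_mul]
  map_smul' c p := by ext x; simp [mul_assoc]

lemma polyMul_apply (w : EuclideanSpace ℝ ι → ℝ) (p : MvPolynomial ι ℝ) (x : EuclideanSpace ℝ ι) :
    polyMul w p x = MvPolynomial.eval x.ofLp p * w x := rfl

lemma continuous_polyMul {w : EuclideanSpace ℝ ι → ℝ} (hw : Continuous w) (p : MvPolynomial ι ℝ) :
    Continuous (polyMul w p) :=
  ((MvPolynomial.continuous_eval p).comp (PiLp.continuous_ofLp 2 _)).mul hw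

variable [Fintype ι]

lemma analyticOnNhd_eval (p : MvPolynomial ι ℝ) :
    AnalyticOnNhd ℝ (fun x : EuclideanSpace ℝ ι => MvPolynomial.eval x.ofLp p) univ :=
  .eval_continuousLinearMap (EuclideanSpace.equiv ι ℝ : EuclideanSpace ℝ ι →L[ℝ] ι → ℝ) p

lemma contDiff_polyMul {w : EuclideanSpace ℝ ι → ℝ} {n : ℕ∞} (hw : ContDiff ℝ n w)
    (p : MvPolynomial ι ℝ) : ContDiff ℝ n (polyMul w p) :=
  (analyticOnNhd_eval p).contDiff.mul hw

lemma eq_zero_of_polyMul_ae_eq_zero {w : EuclideanSpace ℝ ι → ℝ} (hw : Continuous w)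
    {Ω : Set (EuclideanSpace ℝ ι)} (hΩ : IsOpen Ω) (hwΩ : ∃ x ∈ Ω, w x ≠ 0)
    {p : MvPolynomial ι ℝ} (hp : polyMul w p =ᵐ[volume.restrict Ω] 0) : p = 0 := by
  obtain ⟨x₀, hx₀, hwx₀⟩ := hwΩ
  have hzero : EqOn (polyMul w p) 0 Ω :=
    Measure.eqOn_open_of_ae_eq hp hΩ (continuous_polyMul hw p).continuousOn continuousOn_const
  have hnear : ∀ᶠ x in 𝓝 x₀, MvPolynomial.eval x.ofLp p = 0 := by
    filter_upwards [hΩ.mem_nhds hx₀, hw.continuousAt.eventually_ne hwx₀] with x hx hwx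
    exact (mul_eq_zero.1 (hzero hx)).resolve_right hwx
  have hall := (analyticOnNhd_eval p).eqOn_zero_of_preconnected_of_eventuallyEq_zero
    isPreconnected_univ (mem_univ x₀) hnear
  exact MvPolynomial.funext fun x => by simpa using hall (mem_univ (WithLp.toLp 2 x))

lemma exists_norm_le_mul_sqrt_integral_polyMul_sq (k : ℕ) {Ω : Set (EuclideanSpace ℝ ι)}
    (hΩ : IsOpen Ω) (hΩb : Bornology.IsBounded Ω) {w : EuclideanSpace ℝ ι → ℝ} (hw : Continuous w)
    (hwΩ : ∃ x ∈ Ω, w x ≠ 0) {κ F : Type*} [NormedAddCommGroup F] [NormedSpace ℝ F]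
    (f : MvPolynomial ι ℝ →ₗ[ℝ] κ → F) (hf : ∀ p, ∃ C, ∀ i, ‖f p i‖ ≤ C) :
    ∃ C : ℝ, 0 < C ∧ ∀ p : MvPolynomial ι ℝ, p.totalDegree ≤ k →
      ∀ i, ‖f p i‖ ≤ C * √(∫ x in Ω, polyMul w p x ^ 2) := by
  let V := MvPolynomial.restrictTotalDegree ι ℝ k
  obtain ⟨C, hC, hfC⟩ := exists_norm_le_mul_sqrt_integral_sq (g := (polyMul w).domRestrict V)
    (fun p => memLp_restrict_of_continuous hΩb (continuous_polyMul hw p) 2)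
    (fun p hp => Subtype.ext (eq_zero_of_polyMul_ae_eq_zero hw hΩ hwΩ hp))
    (f.domRestrict V) (fun p => hf p)
  exact ⟨C, hC, fun p hp => hfC ⟨p, (MvPolynomial.mem_restrictTotalDegree _ _ _).2 hp⟩⟩

lemma exists_integral_sq_le_mul_integral_sq_mul (k : ℕ) {Ω : Set (EuclideanSpace ℝ ι)}
    (hΩ : IsOpen Ω) (hΩb : Bornology.IsBounded Ω) {η : EuclideanSpace ℝ ι → ℝ}
    (hη : Continuous η) (hη₀ : ∀ x, 0 ≤ η x) (hηΩ : ∃ x ∈ Ω, η x ≠ 0) :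
    ∃ C : ℝ, 0 < C ∧ ∀ p : MvPolynomial ι ℝ, p.totalDegree ≤ k →
      ∫ x in Ω, MvPolynomial.eval x.ofLp p ^ 2 ≤
        C * ∫ x in Ω, MvPolynomial.eval x.ofLp p ^ 2 * η x := by
  let f : MvPolynomial ι ℝ →ₗ[ℝ] Ω → ℝ := .funLeft ℝ ℝ Subtype.val ∘ₗ polyMul 1
  have hf (p : MvPolynomial ι ℝ) : ∃ C, ∀ x, ‖f p x‖ ≤ C := by
    obtain ⟨C, hC⟩ := hΩb.isCompact_closure.exists_bound_of_continuousOn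
      (continuous_polyMul continuous_one p).continuousOn
    exact ⟨C, fun x => hC x (subset_closure x.2)⟩
  obtain ⟨C, hC, hsup⟩ := exists_norm_le_mul_sqrt_integral_polyMul_sq k hΩ hΩb hη.sqrt
    (by simpa only [Real.sqrt_ne_zero (hη₀ _)] using hηΩ) f hf
  have hvol : 0 < volume.real Ω :=
    ENNReal.toReal_pos (hΩ.measure_pos volume (hηΩ.imp fun _ h => h.1)).ne' hΩb.measure_lt_top.ne
  refine ⟨C ^ 2 * volume.real Ω, by positivity, fun p hp => ?_⟩
  set I := ∫ x in Ω, MvPolynomial.eval x.ofLp p ^ 2 * η x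
  have hI : ∫ x in Ω, polyMul (fun x => √(η x)) p x ^ 2 = I := by
    simp only [polyMul_apply, mul_pow, Real.sq_sqrt (hη₀ _), I]
  have hI₀ : 0 ≤ I := integral_nonneg fun x => mul_nonneg (sq_nonneg _) (hη₀ x)
  have hpoint : ∀ x ∈ Ω, ‖MvPolynomial.eval x.ofLp p ^ 2‖ ≤ C ^ 2 * I := fun x hx => by
    calc ‖MvPolynomial.eval x.ofLp p ^ 2‖ = ‖f p ⟨x, hx⟩‖ ^ 2 := by simp [f, polyMul_apply]
      _ ≤ (C * √I) ^ 2 := by gcongr; exact hI ▸ hsup p hp ⟨x, hx⟩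
      _ = C ^ 2 * I := by rw [mul_pow, Real.sq_sqrt hI₀]
  calc ∫ x in Ω, MvPolynomial.eval x.ofLp p ^ 2
      ≤ C ^ 2 * I * volume.real Ω := (le_abs_self _).trans
        (norm_setIntegral_le_of_norm_le_const hΩb.measure_lt_top hpoint)
    _ = C ^ 2 * volume.real Ω * I := by ring

lemma exists_lipschitzWith_fderiv_polyMul {η : EuclideanSpace ℝ ι → ℝ} (hη : ContDiff ℝ 2 η)
    (hηc : HasCompactSupport η) (p : MvPolynomial ι ℝ) :
    ∃ K, LipschitzWith K (fderiv ℝ (polyMul η p)) := by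
  have hsupp : HasCompactSupport (polyMul η p) := hηc.mul_left
  have hderiv : ContDiff ℝ 1 (fderiv ℝ (polyMul η p)) :=
    (contDiff_polyMul hη p).fderiv_right (by norm_num)
  exact hderiv.lipschitzWith_of_hasCompactSupport (hsupp.fderiv ℝ) one_ne_zero

lemma exists_norm_fderiv_polyMul_sub_le (k : ℕ) {Ω : Set (EuclideanSpace ℝ ι)}
    (hΩ : IsOpen Ω) (hΩb : Bornology.IsBounded Ω) (hΩne : Ω.Nonempty)
    {η : EuclideanSpace ℝ ι → ℝ} (hη : ContDiff ℝ 2 η) (hηc : HasCompactSupport η) :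
    ∃ C : ℝ, 0 < C ∧ ∀ p : MvPolynomial ι ℝ, p.totalDegree ≤ k → ∀ x y,
      ‖fderiv ℝ (polyMul η p) x - fderiv ℝ (polyMul η p) y‖ ≤
        C * √(∫ x in Ω, MvPolynomial.eval x.ofLp p ^ 2) * dist x y := by
  have hdiff (p : MvPolynomial ι ℝ) : Differentiable ℝ (polyMul η p) :=
    (contDiff_polyMul hη p).differentiable two_ne_zero
  let slope : MvPolynomial ι ℝ →ₗ[ℝ]
      EuclideanSpace ℝ ι × EuclideanSpace ℝ ι → EuclideanSpace ℝ ι →L[ℝ] ℝ :=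
    { toFun p z := (dist z.1 z.2)⁻¹ • (fderiv ℝ (polyMul η p) z.1 - fderiv ℝ (polyMul η p) z.2)
      map_add' p q := by
        ext1 z
        simp only [map_add, Pi.add_apply, fderiv_add (hdiff p _) (hdiff q _)]
        module
      map_smul' c p := by
        ext1 z
        simp only [map_smul, Pi.smul_apply, fderiv_const_smul (hdiff p _), RingHom.id_apply]
        module }
  have norm_slope (p x y) : ‖slope p (x, y)‖ =
      (dist x y)⁻¹ * ‖fderiv ℝ (polyMul η p) x - fderiv ℝ (polyMul η p) y‖ := by
    simp [slope, norm_smul, abs_of_nonneg]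
  have hslope (p) : ∃ C, ∀ z, ‖slope p z‖ ≤ C := by
    obtain ⟨K, hK⟩ := exists_lipschitzWith_fderiv_polyMul hη hηc p
    refine ⟨K, fun ⟨x, y⟩ => ?_⟩
    rw [norm_slope, ← dist_eq_norm]
    exact inv_mul_le_of_le_mul₀ dist_nonneg K.2 (mul_comm (K : ℝ) _ ▸ hK.dist_le_mul x y)
  obtain ⟨C, hC, hslopeC⟩ := exists_norm_le_mul_sqrt_integral_polyMul_sq k hΩ hΩb continuous_one
    (hΩne.imp fun _ hx => ⟨hx, one_ne_zero⟩) slope hslope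
  refine ⟨C, hC, fun p hp x y => ?_⟩
  rcases eq_or_ne x y with rfl | hxy
  · simp
  have hpxy := hslopeC p hp (x, y)
  rw [norm_slope, inv_mul_le_iff₀' (dist_pos.2 hxy)] at hpxy
  simpa [polyMul_apply] using hpxy

end PolyMul

/-! ### Affine changes of variables -/

lemma totalDegree_bind₁_le {R κ τ : Type*} [CommSemiring R] {f : κ → MvPolynomial τ R} {n : ℕ}
    (hf : ∀ i, (f i).totalDegree ≤ n) (p : MvPolynomial κ R) :
    (MvPolynomial.bind₁ f p).totalDegree ≤ n * p.totalDegree := by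
  rw [MvPolynomial.bind₁, MvPolynomial.aeval_def, MvPolynomial.eval₂_eq]
  refine MvPolynomial.totalDegree_finsetSum_le fun d hd => ?_
  calc (algebraMap R (MvPolynomial τ R) (p.coeff d) * ∏ i ∈ d.support, f i ^ d i).totalDegree
      ≤ (∏ i ∈ d.support, f i ^ d i).totalDegree :=
        (MvPolynomial.totalDegree_mul _ _).trans_eq (by simp [MvPolynomial.algebraMap_eq])
    _ ≤ ∑ i ∈ d.support, d i * n :=
        (MvPolynomial.totalDegree_finsetProd _ _).trans <| Finset.sum_le_sum fun i _ =>
          (MvPolynomial.totalDegree_pow _ _).trans (Nat.mul_le_mul_left _ (hf i))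
    _ ≤ n * p.totalDegree := by
        rw [← Finset.sum_mul, mul_comm]
        exact Nat.mul_le_mul_left _ (MvPolynomial.le_totalDegree hd)

lemma exists_eval_eq_eval_affine {ι κ : Type*} [Finite ι]
    (A : EuclideanSpace ℝ ι →ₗ[ℝ] EuclideanSpace ℝ κ) (b : EuclideanSpace ℝ κ)
    (p : MvPolynomial κ ℝ) :
    ∃ q : MvPolynomial ι ℝ, q.totalDegree ≤ p.totalDegree ∧
      ∀ x, MvPolynomial.eval x.ofLp q = MvPolynomial.eval (A x + b).ofLp p := by
  classical
  have := Fintype.ofFinite ι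
  let l (i : κ) : MvPolynomial ι ℝ :=
    ∑ j, MvPolynomial.C (A (EuclideanSpace.single j 1) i) * MvPolynomial.X j + MvPolynomial.C (b i)
  have hl (i : κ) : (l i).totalDegree ≤ 1 := by
    refine (MvPolynomial.totalDegree_add _ _).trans (max_le ?_ (by simp))
    exact MvPolynomial.totalDegree_finsetSum_le fun j _ =>
      (MvPolynomial.totalDegree_mul _ _).trans (by simp)
  have eval_l (x : EuclideanSpace ℝ ι) (i : κ) :
      MvPolynomial.eval x.ofLp (l i) = (A x + b).ofLp i := by
    have hx : x = ∑ j, x j • EuclideanSpace.single j (1 : ℝ) := by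
      simpa using ((EuclideanSpace.basisFun ι ℝ).sum_repr x).symm
    have hAx : A x i = ∑ j, x j * A (EuclideanSpace.single j 1) i := by
      conv_lhs => rw [hx]
      simp [map_sum]
    simp [l, hAx, mul_comm]
  refine ⟨MvPolynomial.bind₁ l p, (totalDegree_bind₁_le hl p).trans_eq (one_mul _), fun x => ?_⟩
  rw [MvPolynomial.eval, MvPolynomial.eval₂Hom_bind₁]
  exact congrArg (MvPolynomial.eval · p) (funext (eval_l x))

lemma abs_det_pos {E : Type*} [NormedAddCommGroup E] [NormedSpace ℝ E] (A : E ≃L[ℝ] E) :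
    0 < |(A : E →L[ℝ] E).det| :=
  abs_pos.2 (LinearEquiv.isUnit_det' A.toLinearEquiv).ne_zero

section ChangeOfVariables

variable {E : Type*} [NormedAddCommGroup E] [NormedSpace ℝ E] [MeasurableSpace E] [BorelSpace E]
  [FiniteDimensional ℝ E] (μ : Measure E) [μ.IsAddHaarMeasure] (A : E ≃L[ℝ] E) (b : E)

lemma setIntegral_affine_image {F : Type*} [NormedAddCommGroup F] [NormedSpace ℝ F] {Ω : Set E}
    (hΩ : MeasurableSet Ω) (f : E → F) :
    ∫ x in (fun x => A x + b) '' Ω, f x ∂μ =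
      |(A : E →L[ℝ] E).det| • ∫ x in Ω, f (A x + b) ∂μ := by
  rw [← integral_smul]
  exact integral_image_eq_integral_abs_det_fderiv_smul μ hΩ (f' := fun _ => (A : E →L[ℝ] E))
    (fun x _ => ((A : E →L[ℝ] E).hasFDerivAt.add_const b).hasFDerivWithinAt)
    (fun x _ y _ h => A.injective (add_right_cancel h)) f

lemma measureReal_affine_image (Ω : Set E) :
    μ.real ((fun x => A x + b) '' Ω) = |(A : E →L[ℝ] E).det| * μ.real Ω := by
  have himage : (fun x => A x + b) '' Ω = (· + b) '' (A '' Ω) := (image_image (· + b) A Ω).symm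
  rw [himage, measureReal_def, image_add_right, measure_preimage_add_right,
    Measure.addHaar_image_continuousLinearEquiv, ENNReal.toReal_mul,
    ENNReal.toReal_ofReal (abs_nonneg _)]
  rfl

end ChangeOfVariables

lemma norm_fderiv_comp_affine_sub_le {E F G : Type*} [NormedAddCommGroup E] [NormedSpace ℝ E]
    [NormedAddCommGroup F] [NormedSpace ℝ F] [NormedAddCommGroup G] [NormedSpace ℝ G] {g : F → G}
    {K : ℝ} (hK : 0 ≤ K) (hg : ∀ x y, ‖fderiv ℝ g x - fderiv ℝ g y‖ ≤ K * dist x y)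
    (B : E ≃L[ℝ] F) (b x y : E) :
    ‖fderiv ℝ (fun z => g (B (z - b))) x - fderiv ℝ (fun z => g (B (z - b))) y‖ ≤
      K * ‖(B : E →L[ℝ] F)‖ ^ 2 * dist x y := by
  have hfderiv (z : E) : fderiv ℝ (fun z => g (B (z - b))) z =
      (fderiv ℝ g (B (z - b))).comp (B : E →L[ℝ] F) :=
    (fderiv_comp_sub (f := g ∘ B) b).trans B.comp_right_fderiv
  have hdist : dist (B (x - b)) (B (y - b)) ≤ ‖(B : E →L[ℝ] F)‖ * dist x y := by
    rw [← dist_sub_right x y b]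
    exact (B : E →L[ℝ] F).dist_le_opNorm _ _
  rw [hfderiv, hfderiv, ← ContinuousLinearMap.sub_comp]
  calc ‖(fderiv ℝ g (B (x - b)) - fderiv ℝ g (B (y - b))).comp (B : E →L[ℝ] F)‖
      ≤ K * (‖(B : E →L[ℝ] F)‖ * dist x y) * ‖(B : E →L[ℝ] F)‖ :=
        (ContinuousLinearMap.opNorm_comp_le _ _).trans <| by
          gcongr
          exact (hg _ _).trans (by gcongr)
    _ = K * ‖(B : E →L[ℝ] F)‖ ^ 2 * dist x y := by ring

section AffineImages

variable {ι : Type*} [Fintype ι]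

lemma exists_integral_sq_le_mul_integral_sq_mul_affine (k : ℕ) {Ω : Set (EuclideanSpace ℝ ι)}
    (hΩ : IsOpen Ω) (hΩb : Bornology.IsBounded Ω) {η : EuclideanSpace ℝ ι → ℝ}
    (hη : Continuous η) (hη₀ : ∀ x, 0 ≤ η x) (hηΩ : ∃ x ∈ Ω, η x ≠ 0) :
    ∃ C : ℝ, 0 < C ∧ ∀ (A : EuclideanSpace ℝ ι ≃L[ℝ] EuclideanSpace ℝ ι)
      (b : EuclideanSpace ℝ ι) (p : MvPolynomial ι ℝ), p.totalDegree ≤ k →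
      ∫ x in (fun x => A x + b) '' Ω, MvPolynomial.eval x.ofLp p ^ 2 ≤
        C * ∫ x in (fun x => A x + b) '' Ω,
          MvPolynomial.eval x.ofLp p ^ 2 * η (A.symm (x - b)) := by
  obtain ⟨C, hC, hbound⟩ := exists_integral_sq_le_mul_integral_sq_mul k hΩ hΩb hη hη₀ hηΩ
  refine ⟨C, hC, fun A b p hp => ?_⟩
  obtain ⟨q, hqp, hq⟩ := exists_eval_eq_eval_affine A.toLinearMap b p
  simp only [ContinuousLinearEquiv.coe_toLinearEquiv, LinearEquiv.coe_coe] at hq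
  simp only [setIntegral_affine_image volume A b hΩ.measurableSet, ← hq, add_sub_cancel_right,
    ContinuousLinearEquiv.symm_apply_apply, smul_eq_mul, mul_left_comm C]
  exact mul_le_mul_of_nonneg_left (hbound q (hqp.trans hp)) (abs_nonneg _)

lemma exists_norm_fderiv_polyMul_affine_sub_le (k : ℕ) {Ω : Set (EuclideanSpace ℝ ι)}
    (hΩ : IsOpen Ω) (hΩb : Bornology.IsBounded Ω) (hΩne : Ω.Nonempty)
    {η : EuclideanSpace ℝ ι → ℝ} (hη : ContDiff ℝ 2 η) (hηc : HasCompactSupport η) :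
    ∃ C : ℝ, 0 < C ∧ ∀ (A : EuclideanSpace ℝ ι ≃L[ℝ] EuclideanSpace ℝ ι)
      (b : EuclideanSpace ℝ ι) (p : MvPolynomial ι ℝ), p.totalDegree ≤ k → ∀ x y,
      ‖fderiv ℝ (polyMul (fun z => η (A.symm (z - b))) p) x -
          fderiv ℝ (polyMul (fun z => η (A.symm (z - b))) p) y‖ ≤
        C * √(|(A : EuclideanSpace ℝ ι →L[ℝ] EuclideanSpace ℝ ι).det|⁻¹ *
            ∫ z in (fun z => A z + b) '' Ω, MvPolynomial.eval z.ofLp p ^ 2) *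
          ‖(A.symm : EuclideanSpace ℝ ι →L[ℝ] EuclideanSpace ℝ ι)‖ ^ 2 * dist x y := by
  obtain ⟨C, hC, hlip⟩ := exists_norm_fderiv_polyMul_sub_le k hΩ hΩb hΩne hη hηc
  refine ⟨C, hC, fun A b p hp x y => ?_⟩
  obtain ⟨q, hqp, hq⟩ := exists_eval_eq_eval_affine A.toLinearMap b p
  simp only [ContinuousLinearEquiv.coe_toLinearEquiv, LinearEquiv.coe_coe] at hq
  have hpull : polyMul (fun z => η (A.symm (z - b))) p =
      fun z => polyMul η q (A.symm (z - b)) := by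
    ext z
    simp only [polyMul_apply, hq, ContinuousLinearEquiv.apply_symm_apply, sub_add_cancel]
  simp only [hpull, setIntegral_affine_image volume A b hΩ.measurableSet, ← hq, smul_eq_mul,
    inv_mul_cancel_left₀ (abs_det_pos A).ne']
  exact norm_fderiv_comp_affine_sub_le (by positivity) (hlip q (hqp.trans hp)) A.symm b x y

end AffineImages

/-! ### Weakly singular integrals -/

lemma norm_rpow_neg_le_indicator_add_one {E : Type*} [NormedAddCommGroup E] [NormedSpace ℝ E]
    {a h : ℝ} (ha : 0 ≤ a) (hh : 0 < h) (z : E) :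
    ‖z‖ ^ (-a) ≤ h ^ (-a) * ((ball (0 : E) 1).indicator (‖·‖ ^ (-a)) (h⁻¹ • z) + 1) := by
  have hnorm : ‖z‖ = h * ‖h⁻¹ • z‖ := by
    rw [norm_smul, norm_inv, Real.norm_of_nonneg hh.le, mul_inv_cancel_left₀ hh.ne']
  rw [hnorm, Real.mul_rpow hh.le (norm_nonneg _)]
  gcongr
  by_cases hz : h⁻¹ • z ∈ ball (0 : E) 1
  · rw [indicator_of_mem hz]
    simp
  · rw [indicator_of_notMem hz, zero_add]
    rw [mem_ball_zero_iff, not_lt] at hz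
    exact Real.rpow_le_one_of_one_le_of_nonpos hz (neg_nonpos.2 ha)

section WeaklySingular

variable {E : Type*} [NormedAddCommGroup E] [NormedSpace ℝ E] [MeasurableSpace E] [BorelSpace E]
  [FiniteDimensional ℝ E] (μ : Measure E) [μ.IsAddHaarMeasure]

lemma integrable_indicator_ball_norm_rpow_neg {a : ℝ} (ha : 0 ≤ a) (had : a < finrank ℝ E) :
    Integrable ((ball (0 : E) 1).indicator (‖·‖ ^ (-a))) μ := by
  rw [integrable_indicator_iff measurableSet_ball]
  refine integrableOn_ball_of_norm_le_rpow (C := 1) (α := a)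
    (Nat.one_le_iff_ne_zero.2 fun h => ?_) had ?_ (measurable_norm.pow_const _).aestronglyMeasurable
  · exact (ha.trans_lt had).ne' (by simp [h])
  · exact .of_forall fun x => by simp [abs_of_nonneg, Real.rpow_nonneg]

lemma integrableOn_dist_rpow_neg {a : ℝ} (ha : 0 ≤ a) (had : a < finrank ℝ E) {G : Set E}
    (hG : μ G ≠ ∞) (x : E) : IntegrableOn (fun y => dist x y ^ (-a)) G μ := by
  have hball := (integrable_indicator_ball_norm_rpow_neg μ ha had).comp_sub_right x
  have hmaj := hball.integrableOn.add (integrableOn_const (C := (1 : ℝ)) hG)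
  refine hmaj.mono' ((measurable_const.dist measurable_id).pow_const _).aestronglyMeasurable
    (.of_forall fun y => ?_)
  rw [Real.norm_of_nonneg (by positivity), dist_comm, dist_eq_norm]
  simpa using norm_rpow_neg_le_indicator_add_one ha one_pos (y - x)

lemma setIntegral_dist_rpow_neg_le {a : ℝ} (ha : 0 ≤ a) (had : a < finrank ℝ E) {G : Set E}
    (hG : 0 < μ.real G) (x : E) :
    ∫ y in G, dist x y ^ (-a) ∂μ ≤
      ((∫ z in ball (0 : E) 1, ‖z‖ ^ (-a) ∂μ) + 1) * μ.real G ^ (1 - a / finrank ℝ E) := by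
  set h := μ.real G ^ (finrank ℝ E : ℝ)⁻¹
  have hh : 0 < h := Real.rpow_pos_of_pos hG _
  have hh_pow : h ^ finrank ℝ E = μ.real G :=
    Real.rpow_inv_natCast_pow hG.le (mod_cast (ha.trans_lt had).ne')
  let φ : E → ℝ := (ball 0 1).indicator (‖·‖ ^ (-a))
  have hφ₀ (z : E) : 0 ≤ φ z := indicator_nonneg (fun _ _ => by positivity) z
  have hφ : Integrable (fun y => φ (h⁻¹ • (y - x))) μ :=
    ((integrable_indicator_ball_norm_rpow_neg μ ha had).comp_smul
      (inv_ne_zero hh.ne')).comp_sub_right x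
  have hφ_int : ∫ y, φ (h⁻¹ • (y - x)) ∂μ = μ.real G * ∫ z in ball (0 : E) 1, ‖z‖ ^ (-a) ∂μ := by
    rw [integral_sub_right_eq_self (fun y => φ (h⁻¹ • y)), Measure.integral_comp_smul, inv_pow,
      inv_inv, hh_pow, abs_of_pos hG, smul_eq_mul, integral_indicator measurableSet_ball]
  have hone : IntegrableOn (fun _ : E => (1 : ℝ)) G μ :=
    integrableOn_const (ENNReal.toReal_pos_iff.1 hG).2.ne
  calc ∫ y in G, dist x y ^ (-a) ∂μ ≤ ∫ y in G, h ^ (-a) * (φ (h⁻¹ • (y - x)) + 1) ∂μ := by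
        refine integral_mono_of_nonneg (.of_forall fun y => by positivity)
          ((hφ.integrableOn.add hone).const_mul _) (.of_forall fun y => ?_)
        simp only [dist_comm x y, dist_eq_norm]
        exact norm_rpow_neg_le_indicator_add_one ha hh (y - x)
    _ ≤ h ^ (-a) * (∫ y, φ (h⁻¹ • (y - x)) ∂μ + μ.real G) := by
        rw [integral_const_mul, integral_add hφ.integrableOn hone, setIntegral_const,
          smul_eq_mul, mul_one]
        gcongr _ * (?_ + _)
        exact setIntegral_le_integral hφ (.of_forall fun _ => hφ₀ _)
    _ = ((∫ z in ball (0 : E) 1, ‖z‖ ^ (-a) ∂μ) + 1) * μ.real G ^ (1 - a / finrank ℝ E) := by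
        rw [hφ_int, ← Real.rpow_mul hG.le, sub_eq_neg_add, Real.rpow_add_one hG.ne']
        ring_nf

end WeaklySingular

lemma sq_div_rpow_le {t L d s : ℝ} (hd : 0 ≤ d) (ht : |t| ≤ L * d) :
    t ^ 2 / d ^ (2 + s) ≤ L ^ 2 * d ^ (-s) := by
  rcases hd.eq_or_lt with rfl | hd
  · obtain rfl : t = 0 := by simpa using ht
    simp only [ne_eq, OfNat.ofNat_ne_zero, not_false_eq_true, zero_pow, zero_div]
    positivity
  rw [div_le_iff₀ (by positivity), mul_assoc, ← Real.rpow_add hd, neg_add_cancel_comm_assoc,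
    Real.rpow_two, ← mul_pow, ← sq_abs]
  gcongr

lemma gagSq_le_of_abs_sub_le {θ : ℝ} (hθ₀ : 0 ≤ θ) (hθ₁ : θ < 1) {G : Set E2}
    (hG : 0 < volume.real G) {v : E2 → ℝ} {L : ℝ} (hv : ∀ x y, |v x - v y| ≤ L * dist x y) :
    gagSq θ G v ≤
      ((∫ z in ball (0 : E2) 1, ‖z‖ ^ (-(2 * θ))) + 1) * L ^ 2 * volume.real G ^ (2 - θ) := by
  set κ := ∫ z in ball (0 : E2) 1, ‖z‖ ^ (-(2 * θ))
  have hG_fin : volume G ≠ ∞ := (ENNReal.toReal_pos_iff.1 hG).2.ne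
  have hdim : 2 * θ < finrank ℝ E2 := by
    rw [finrank_euclideanSpace_fin]
    push_cast
    linarith
  have hsing (x : E2) : ∫ y in G, dist x y ^ (-(2 * θ)) ≤ (κ + 1) * volume.real G ^ (1 - θ) := by
    simpa using setIntegral_dist_rpow_neg_le volume (by positivity) hdim hG x
  have hinner (x : E2) : ∫ y in G, (v x - v y) ^ 2 / dist x y ^ (2 + 2 * θ) ≤
      L ^ 2 * ((κ + 1) * volume.real G ^ (1 - θ)) :=
    calc ∫ y in G, (v x - v y) ^ 2 / dist x y ^ (2 + 2 * θ)
        ≤ ∫ y in G, L ^ 2 * dist x y ^ (-(2 * θ)) :=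
          integral_mono_of_nonneg (.of_forall fun y => by positivity)
            ((integrableOn_dist_rpow_neg volume (by positivity) hdim hG_fin x).const_mul _)
            (.of_forall fun y => sq_div_rpow_le dist_nonneg (hv x y))
      _ ≤ L ^ 2 * ((κ + 1) * volume.real G ^ (1 - θ)) := by
          rw [integral_const_mul]
          gcongr
          exact hsing x
  calc gagSq θ G v ≤ ∫ _ in G, L ^ 2 * ((κ + 1) * volume.real G ^ (1 - θ)) :=
        integral_mono_of_nonneg (.of_forall fun x => integral_nonneg fun y => by positivity)
          (integrableOn_const hG_fin) (.of_forall hinner)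
    _ = (κ + 1) * L ^ 2 * volume.real G ^ (2 - θ) := by
        rw [setIntegral_const, smul_eq_mul, show 2 - θ = 1 - θ + 1 by ring,
          Real.rpow_add_one hG.ne']
        ring

/-! ### Triangles with a minimal angle -/

lemma sin_angle_mul_norm_mul_norm_eq_abs (u v : E2) :
    Real.sin (InnerProductGeometry.angle u v) * (‖u‖ * ‖v‖) = |u 0 * v 1 - u 1 * v 0| := by
  rw [InnerProductGeometry.sin_angle_mul_norm_mul_norm, ← Real.sqrt_sq_eq_abs,
    real_inner_self_eq_norm_sq, real_inner_self_eq_norm_sq, EuclideanSpace.real_norm_sq_eq,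
    EuclideanSpace.real_norm_sq_eq]
  simp only [PiLp.inner_apply, Fin.sum_univ_two, Real.inner_apply]
  ring_nf

lemma det_eq_sub (A : E2 →L[ℝ] E2) :
    A.det = A (EuclideanSpace.single 0 1) 0 * A (EuclideanSpace.single 1 1) 1 -
      A (EuclideanSpace.single 1 1) 0 * A (EuclideanSpace.single 0 1) 1 := by
  rw [ContinuousLinearMap.det,
    ← LinearMap.det_toMatrix (EuclideanSpace.basisFun (Fin 2) ℝ).toBasis, Matrix.det_fin_two]
  simp [LinearMap.toMatrix_apply]

lemma det_sq_mul_norm_sq_le (A : E2 →L[ℝ] E2) (y : E2) :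
    A.det ^ 2 * ‖y‖ ^ 2 ≤
      (‖A (EuclideanSpace.single 0 1)‖ ^ 2 + ‖A (EuclideanSpace.single 1 1)‖ ^ 2) *
        ‖A y‖ ^ 2 := by
  have hy : y = y 0 • EuclideanSpace.single 0 (1 : ℝ) + y 1 • EuclideanSpace.single 1 (1 : ℝ) := by
    ext i
    fin_cases i <;> simp
  have hAy (i : Fin 2) : A y i =
      y 0 * A (EuclideanSpace.single 0 1) i + y 1 * A (EuclideanSpace.single 1 1) i := by
    conv_lhs => rw [hy]
    simp only [map_add, map_smul, PiLp.add_apply, PiLp.smul_apply, smul_eq_mul]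
  rw [det_eq_sub]
  simp only [EuclideanSpace.real_norm_sq_eq, Fin.sum_univ_two, hAy]
  generalize A (EuclideanSpace.single 0 1) = u
  generalize A (EuclideanSpace.single 1 1) = v
  -- By Cramer's rule and Lagrange's identity the difference is `⟪A y, v⟫² + ⟪A y, u⟫²`.
  nlinarith [sq_nonneg ((y 0 * u 0 + y 1 * v 0) * v 0 + (y 0 * u 1 + y 1 * v 1) * v 1),
    sq_nonneg ((y 0 * u 0 + y 1 * v 0) * u 0 + (y 0 * u 1 + y 1 * v 1) * u 1)]

lemma norm_symm_sq_le (A : E2 ≃L[ℝ] E2) :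
    ‖(A.symm : E2 →L[ℝ] E2)‖ ^ 2 ≤
      (‖A (EuclideanSpace.single 0 1)‖ ^ 2 + ‖A (EuclideanSpace.single 1 1)‖ ^ 2) /
        |(A : E2 →L[ℝ] E2).det| ^ 2 := by
  have hdet := abs_det_pos A
  set S := ‖A (EuclideanSpace.single 0 1)‖ ^ 2 + ‖A (EuclideanSpace.single 1 1)‖ ^ 2
  rw [← Real.le_sqrt (norm_nonneg _) (by positivity)]
  refine ContinuousLinearMap.opNorm_le_bound _ (Real.sqrt_nonneg _) fun x => ?_
  refine le_of_sq_le_sq ?_ (by positivity)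
  rw [mul_pow, Real.sq_sqrt (by positivity), div_mul_eq_mul_div, le_div_iff₀' (by positivity),
    sq_abs]
  simpa using det_sq_mul_norm_sq_le (A : E2 →L[ℝ] E2) (A.symm x)

lemma sin_le_sin_angle_of_angleLB {σ : ℝ} (hσ : 0 ≤ σ) {t : Fin 3 → E2} (ht : t 1 ≠ t 0)
    (h : angleLB σ t) (i : Fin 3) :
    Real.sin σ ≤ Real.sin (EuclideanGeometry.angle (t (i + 1)) (t i) (t (i + 2))) := by
  have hsum := EuclideanGeometry.angle_add_angle_add_angle_eq_pi (t 2) ht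
  rw [EuclideanGeometry.angle_comm (t 0) (t 1) (t 2), EuclideanGeometry.angle_comm (t 1) (t 2),
    EuclideanGeometry.angle_comm (t 2) (t 0)] at hsum
  have h₀ : σ ≤ EuclideanGeometry.angle (t 1) (t 0) (t 2) := h 0
  have h₁ : σ ≤ EuclideanGeometry.angle (t 2) (t 1) (t 0) := h 1
  have h₂ : σ ≤ EuclideanGeometry.angle (t 0) (t 2) (t 1) := h 2
  have hupper : EuclideanGeometry.angle (t (i + 1)) (t i) (t (i + 2)) ≤ Real.pi - σ := by
    fin_cases i
    · exact (by linarith : EuclideanGeometry.angle (t 1) (t 0) (t 2) ≤ Real.pi - σ)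
    · exact (by linarith : EuclideanGeometry.angle (t 2) (t 1) (t 0) ≤ Real.pi - σ)
    · exact (by linarith : EuclideanGeometry.angle (t 0) (t 2) (t 1) ≤ Real.pi - σ)
  rcases le_total (EuclideanGeometry.angle (t (i + 1)) (t i) (t (i + 2))) (Real.pi / 2) with hi | hi
  · exact Real.sin_le_sin_of_le_of_le_pi_div_two (by linarith [Real.pi_pos]) hi (h i)
  · rw [← Real.sin_pi_sub (EuclideanGeometry.angle _ _ _)]
    exact Real.sin_le_sin_of_le_of_le_pi_div_two (by linarith [Real.pi_pos]) (by linarith)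
      (by linarith)

lemma sin_angle_mul_norm_mul_norm_eq_abs_det (A : E2 →L[ℝ] E2) (b : E2) (i : Fin 3) :
    Real.sin (EuclideanGeometry.angle (A (refVert (i + 1)) + b) (A (refVert i) + b)
        (A (refVert (i + 2)) + b)) *
      (‖A (refVert (i + 1)) - A (refVert i)‖ * ‖A (refVert (i + 2)) - A (refVert i)‖) =
      |A.det| := by
  rw [EuclideanGeometry.angle, vsub_eq_sub, vsub_eq_sub, add_sub_add_right_eq_sub,
    add_sub_add_right_eq_sub, sin_angle_mul_norm_mul_norm_eq_abs, det_eq_sub]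
  congr 1
  fin_cases i
  · simp [refVert]
    ring
  · simp [refVert]
    ring
  · simp [refVert]
    ring

lemma sin_mul_sq_norm_add_sq_norm_le {σ : ℝ} (hσ : 0 ≤ σ) (A : E2 ≃L[ℝ] E2) (b : E2)
    (h : angleLB σ fun i => A (refVert i) + b) :
    Real.sin σ * (‖A (EuclideanSpace.single 0 1)‖ ^ 2 + ‖A (EuclideanSpace.single 1 1)‖ ^ 2) ≤
      4 * |(A : E2 →L[ℝ] E2).det| := by
  have hsin₀ : 0 ≤ Real.sin σ :=
    Real.sin_nonneg_of_nonneg_of_le_pi hσ ((h 0).trans (EuclideanGeometry.angle_le_pi _ _ _))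
  have hne : A (refVert 1) + b ≠ A (refVert 0) + b := by simp [refVert]
  have hside (i : Fin 3) : Real.sin σ *
      (‖A (refVert (i + 1)) - A (refVert i)‖ * ‖A (refVert (i + 2)) - A (refVert i)‖) ≤
        |(A : E2 →L[ℝ] E2).det| := by
    refine le_of_le_of_eq ?_ (sin_angle_mul_norm_mul_norm_eq_abs_det (A : E2 →L[ℝ] E2) b i)
    exact mul_le_mul_of_nonneg_right (sin_le_sin_angle_of_angleLB hσ hne h i) (by positivity)
  set D := |(A : E2 →L[ℝ] E2).det|
  set u := A (EuclideanSpace.single 0 1)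
  set v := A (EuclideanSpace.single 1 1)
  have huv : Real.sin σ * (‖u‖ * ‖v‖) ≤ D := by simpa [refVert] using hside 0
  have huw : Real.sin σ * (‖v - u‖ * ‖u‖) ≤ D := by simpa [refVert] using hside 1
  have hvw : Real.sin σ * (‖v‖ * ‖v - u‖) ≤ D := by simpa [refVert, norm_sub_rev] using hside 2
  calc Real.sin σ * (‖u‖ ^ 2 + ‖v‖ ^ 2)
      ≤ Real.sin σ * (‖u‖ * (‖v‖ + ‖v - u‖) + ‖v‖ * (‖u‖ + ‖v - u‖)) := by
        rw [sq, sq]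
        gcongr
        · exact norm_le_norm_add_norm_sub v u
        · exact norm_le_norm_add_norm_sub' v u
    _ ≤ 4 * D := by linarith

lemma exists_norm_symm_sq_le_div_abs_det {σ : ℝ} (hσ : 0 < σ) :
    ∃ C : ℝ, 0 < C ∧ ∀ (A : E2 ≃L[ℝ] E2) (b : E2), angleLB σ (fun i => A (refVert i) + b) →
      ‖(A.symm : E2 →L[ℝ] E2)‖ ^ 2 ≤ C / |(A : E2 →L[ℝ] E2).det| := by
  have hsin : 0 < Real.sin (min σ 1) :=
    Real.sin_pos_of_pos_of_lt_pi (lt_min hσ one_pos)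
      ((min_le_right _ _).trans_lt (by linarith [Real.pi_gt_three]))
  refine ⟨4 / Real.sin (min σ 1), by positivity, fun A b h => ?_⟩
  have hdet := abs_det_pos A
  have hbound := sin_mul_sq_norm_add_sq_norm_le (le_min hσ.le zero_le_one) A b
    fun i => (min_le_left _ _).trans (h i)
  refine (norm_symm_sq_le A).trans ?_
  rw [div_div, div_le_div_iff₀ (by positivity) (by positivity)]
  nlinarith

/-! ### The reference triangle and its cut-off function -/

lemma isOpen_refTri : IsOpen refTri := by
  have hcoord (i : Fin 2) : Continuous fun x : E2 => x i := by fun_prop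
  exact (isOpen_lt continuous_const (hcoord 0)).inter <|
    (isOpen_lt continuous_const (hcoord 1)).inter <|
      isOpen_lt ((hcoord 0).add (hcoord 1)) continuous_const

lemma isBounded_refTri : Bornology.IsBounded refTri := by
  refine isBounded_closedBall.subset (fun x hx => ?_ : refTri ⊆ closedBall 0 1)
  obtain ⟨hx₀, hx₁, hx₀₁⟩ := hx
  rw [mem_closedBall_zero_iff, ← sq_le_one_iff₀ (norm_nonneg _), EuclideanSpace.real_norm_sq_eq,
    Fin.sum_univ_two]
  nlinarith [mul_pos hx₀ hx₁]

lemma incR_pos : 0 < incR := by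
  have : √2 < 2 := (Real.sqrt_lt' two_pos).2 (by norm_num)
  unfold incR
  linarith

lemma incC_mem_refTri : incC ∈ refTri := by
  have hR : incR + incR < 1 := by
    have : 1 < √2 := Real.lt_sqrt_of_sq_lt (by norm_num)
    unfold incR
    linarith
  simpa [refTri, incC, incR_pos] using hR

section Bump

variable (c : E2) {r : ℝ}

lemma etaBump_eq_expNegInvGlue (hr : 0 < r) (x : E2) :
    etaBump c r x = expNegInvGlue (1 - dist x c ^ 2 / r ^ 2) := by
  have hlt : dist x c ^ 2 / r ^ 2 < 1 ↔ dist x c < r := by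
    rw [div_lt_one (by positivity), sq_lt_sq₀ dist_nonneg hr.le]
  by_cases hx : dist x c < r
  · rw [etaBump, if_pos hx, expNegInvGlue, if_neg (by linarith [hlt.2 hx]), ← inv_neg, neg_sub,
      one_div]
  · rw [etaBump, if_neg hx, expNegInvGlue.zero_of_nonpos (by linarith [not_lt.1 (hlt.not.2 hx)])]

lemma contDiff_etaBump (hr : 0 < r) {n : ℕ∞} : ContDiff ℝ n (etaBump c r) := by
  have hquad : ContDiff ℝ n fun x : E2 => 1 - dist x c ^ 2 / r ^ 2 := by
    simp only [dist_eq_norm]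
    exact contDiff_const.sub (((contDiff_id.sub contDiff_const).norm_sq ℝ).div_const _)
  rw [funext (etaBump_eq_expNegInvGlue c hr)]
  exact expNegInvGlue.contDiff.comp hquad

lemma hasCompactSupport_etaBump (r : ℝ) : HasCompactSupport (etaBump c r) :=
  .intro (isCompact_closedBall c r) fun _ hx => if_neg fun h => hx (mem_closedBall.2 h.le)

lemma etaBump_nonneg (r : ℝ) (x : E2) : 0 ≤ etaBump c r x := by
  unfold etaBump
  split_ifs <;> positivity

lemma etaBump_self_pos (hr : 0 < r) : 0 < etaBump c r c := by
  simp only [etaBump, dist_self, if_pos hr, Real.exp_pos]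

end Bump

lemma abs_pd_sub_pd_le (i : Fin 2) (f : E2 → ℝ) (x y : E2) :
    |pd i f x - pd i f y| ≤ ‖fderiv ℝ f x - fderiv ℝ f y‖ := by
  simpa [pd] using
    (fderiv ℝ f x - fderiv ℝ f y).le_opNorm (EuclideanSpace.single i (1 : ℝ))

lemma volumeReal_refTri_pos : 0 < volume.real refTri :=
  ENNReal.toReal_pos (isOpen_refTri.measure_pos volume ⟨incC, incC_mem_refTri⟩).ne'
    isBounded_refTri.measure_lt_top.ne

/-! ### The estimates on triangles -/

lemma exists_norm_fderiv_polyMul_triangle_sub_le (k : ℕ) {σ : ℝ} (hσ : 0 < σ) {η : E2 → ℝ}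
    (hη : ContDiff ℝ 2 η) (hηc : HasCompactSupport η) :
    ∃ C : ℝ, 0 < C ∧ ∀ (A : E2 ≃L[ℝ] E2) (b : E2), angleLB σ (fun i => A (refVert i) + b) →
      ∀ p : MvPolynomial (Fin 2) ℝ, p.totalDegree ≤ k → ∀ x y,
        ‖fderiv ℝ (polyMul (fun z => η (A.symm (z - b))) p) x -
            fderiv ℝ (polyMul (fun z => η (A.symm (z - b))) p) y‖ ≤
          C * √((∫ z in (fun z => A z + b) '' refTri, pfun p z ^ 2) /
            volume.real ((fun z => A z + b) '' refTri) ^ 3) * dist x y := by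
  obtain ⟨C₁, hC₁, hfderiv⟩ := exists_norm_fderiv_polyMul_affine_sub_le k isOpen_refTri
    isBounded_refTri ⟨incC, incC_mem_refTri⟩ hη hηc
  obtain ⟨C₂, hC₂, hsymm⟩ := exists_norm_symm_sq_le_div_abs_det hσ
  set m := volume.real refTri
  have hm : 0 < m := volumeReal_refTri_pos
  refine ⟨C₁ * C₂ * √(m ^ 3), by positivity, fun A b hT p hp x y => ?_⟩
  have hdet := abs_det_pos A
  rw [measureReal_affine_image]
  refine (hfderiv A b p hp x y).trans ?_
  change C₁ * √(_⁻¹ * ∫ z in _, pfun p z ^ 2) * _ * _ ≤ _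
  set P := ∫ z in (fun z => A z + b) '' refTri, pfun p z ^ 2
  set D := |(A : E2 →L[ℝ] E2).det|
  have hsqrt : √(D⁻¹ * P) / D = √(m ^ 3) * √(P / (D * m) ^ 3) := by
    have hscale : m ^ 3 * (P / (D * m) ^ 3) = D⁻¹ * P / D ^ 2 := by field_simp
    rw [← Real.sqrt_mul (by positivity), hscale, Real.sqrt_div' _ (sq_nonneg D),
      Real.sqrt_sq hdet.le]
  calc C₁ * √(D⁻¹ * P) * ‖(A.symm : E2 →L[ℝ] E2)‖ ^ 2 * dist x y
      ≤ C₁ * √(D⁻¹ * P) * (C₂ / D) * dist x y := by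
        gcongr
        exact hsymm A b hT
    _ = C₁ * C₂ * (√(D⁻¹ * P) / D) * dist x y := by ring
    _ = C₁ * C₂ * √(m ^ 3) * √(P / (D * m) ^ 3) * dist x y := by rw [hsqrt]; ring

lemma exists_sqrt_sum_gagSq_pd_le (k : ℕ) {θ σ : ℝ} (hθ₀ : 0 ≤ θ) (hθ₁ : θ < 1) (hσ : 0 < σ)
    {η : E2 → ℝ} (hη : ContDiff ℝ 2 η) (hηc : HasCompactSupport η) :
    ∃ C : ℝ, 0 < C ∧ ∀ (A : E2 ≃L[ℝ] E2) (b : E2), angleLB σ (fun i => A (refVert i) + b) →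
      ∀ p : MvPolynomial (Fin 2) ℝ, p.totalDegree ≤ k →
        √(∑ i : Fin 2, gagSq θ ((fun x => A x + b) '' refTri)
            (pd i fun x => pfun p x * η (A.symm (x - b)))) ≤
          C * √(volume.real ((fun x => A x + b) '' refTri)) ^ (-1 - θ) *
            √(∫ x in (fun x => A x + b) '' refTri, pfun p x ^ 2) := by
  obtain ⟨C, hC, hlip⟩ := exists_norm_fderiv_polyMul_triangle_sub_le k hσ hη hηc
  set κ := ∫ z in ball (0 : E2) 1, ‖z‖ ^ (-(2 * θ))
  have hκ : 0 ≤ κ := integral_nonneg fun z => by positivity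
  refine ⟨√(2 * (κ + 1) * C ^ 2), by positivity, fun A b hT p hp => ?_⟩
  have hV : 0 < volume.real ((fun x => A x + b) '' refTri) := by
    rw [measureReal_affine_image]
    exact mul_pos (abs_det_pos A) volumeReal_refTri_pos
  set T := (fun x => A x + b) '' refTri
  set V := volume.real T
  set P := ∫ x in T, pfun p x ^ 2
  have hpd (i : Fin 2) (x y : E2) : |pd i (fun x => pfun p x * η (A.symm (x - b))) x -
      pd i (fun x => pfun p x * η (A.symm (x - b))) y| ≤ C * √(P / V ^ 3) * dist x y :=
    (abs_pd_sub_pd_le i _ x y).trans (hlip A b hT p hp x y)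
  have hpow : V ^ (2 - θ) = V ^ (-1 - θ) * V ^ 3 := by
    rw [← Real.rpow_add_natCast hV.ne']
    congr 1
    push_cast
    ring
  have hterm (i : Fin 2) : gagSq θ T (pd i fun x => pfun p x * η (A.symm (x - b))) ≤
      (κ + 1) * C ^ 2 * V ^ (-1 - θ) * P :=
    calc gagSq θ T (pd i fun x => pfun p x * η (A.symm (x - b)))
        ≤ (κ + 1) * (C * √(P / V ^ 3)) ^ 2 * V ^ (2 - θ) :=
          gagSq_le_of_abs_sub_le hθ₀ hθ₁ hV (hpd i)
      _ = (κ + 1) * C ^ 2 * V ^ (-1 - θ) * P := by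
        rw [mul_pow, Real.sq_sqrt (by positivity), hpow]
        field_simp
  calc √(∑ i : Fin 2, gagSq θ T (pd i fun x => pfun p x * η (A.symm (x - b))))
      ≤ √(2 * (κ + 1) * C ^ 2 * V ^ (-1 - θ) * P) := by
        gcongr
        rw [Fin.sum_univ_two]
        linarith [hterm 0, hterm 1]
    _ = √(2 * (κ + 1) * C ^ 2) * √V ^ (-1 - θ) * √P := by
        rw [Real.sqrt_mul (by positivity), Real.sqrt_mul (by positivity),
          ← Real.rpow_div_two_eq_sqrt _ hV.le, Real.sqrt_eq_rpow (V ^ _), ← Real.rpow_mul hV.le,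
          mul_one_div]

theorem cutoff_within_triangles_general (k : ℕ) {θ σ : ℝ} (hθ₀ : 0 ≤ θ) (hθ₁ : θ < 1)
    (hσ : 0 < σ) {η : E2 → ℝ} (hη : ContDiff ℝ 2 η) (hηc : HasCompactSupport η)
    (hη₀ : ∀ x, 0 ≤ η x) (hηT : ∃ x ∈ refTri, η x ≠ 0) :
    ∃ C : ℝ, 0 < C ∧ ∀ (A : E2 ≃L[ℝ] E2) (b : E2),
      angleLB σ (fun i => A (refVert i) + b) →
      ∀ p : MvPolynomial (Fin 2) ℝ, p.totalDegree ≤ k →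
        ((∫ x in (fun x => A x + b) '' refTri, (pfun p x) ^ 2) ≤
          C * ∫ x in (fun x => A x + b) '' refTri, (pfun p x) ^ 2 * η (A.symm (x - b))) ∧
        Real.sqrt (∑ i : Fin 2, gagSq θ ((fun x => A x + b) '' refTri)
            (pd i fun x => pfun p x * η (A.symm (x - b)))) ≤
          C * Real.sqrt (volume ((fun x => A x + b) '' refTri)).toReal ^ (-1 - θ) *
            Real.sqrt (∫ x in (fun x => A x + b) '' refTri, (pfun p x) ^ 2) := by
  obtain ⟨C₁, hC₁, hmass⟩ := exists_integral_sq_le_mul_integral_sq_mul_affine k isOpen_refTri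
    isBounded_refTri hη.continuous hη₀ hηT
  obtain ⟨C₂, -, hseminorm⟩ := exists_sqrt_sum_gagSq_pd_le k hθ₀ hθ₁ hσ hη hηc
  refine ⟨max C₁ C₂, lt_max_of_lt_left hC₁, fun A b hT p hp =>
    ⟨(hmass A b p hp).trans ?_, (hseminorm A b hT p hp).trans ?_⟩⟩
  · exact mul_le_mul_of_nonneg_right (le_max_left _ _)
      (integral_nonneg fun x => mul_nonneg (sq_nonneg _) (hη₀ _))
  · rw [measureReal_def]
    gcongr
    exact le_max_right _ _

/-- **Cut-off within triangles** (Lemma 3.6): with `η_T := η_{B̂} ∘ F⁻¹` for the bump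
function `η_{B̂}` of the maximal ball `B̂ ⊆ T̂`, every polynomial `V` of degree `≤ k`
satisfies `∫_T V² ≲ ∫_T V² η_T` and `|∇(V η_T)|_{θ,T} ≲ h_T^{−1−θ} ‖V‖_{0,T}`. -/
theorem cutoff_within_triangles (k : ℕ) (θ σ : ℝ) (hθ0 : 0 < θ) (hθ : θ < 1 / 2)
    (hσ : 0 < σ) :
    ∃ C : ℝ, 0 < C ∧ ∀ (A : E2 ≃L[ℝ] E2) (b : E2),
      angleLB σ (fun i => A (refVert i) + b) →
      ∀ p : MvPolynomial (Fin 2) ℝ, p.totalDegree ≤ k →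
        ((∫ x in (fun x => A x + b) '' refTri, (pfun p x) ^ 2) ≤
          C * ∫ x in (fun x => A x + b) '' refTri,
            (pfun p x) ^ 2 * etaBump incC incR (A.symm (x - b))) ∧
        Real.sqrt (∑ i : Fin 2, gagSq θ ((fun x => A x + b) '' refTri)
            (pd i fun x => pfun p x * etaBump incC incR (A.symm (x - b)))) ≤
          C * Real.sqrt (volume ((fun x => A x + b) '' refTri)).toReal ^ (-1 - θ) *
            Real.sqrt (∫ x in (fun x => A x + b) '' refTri, (pfun p x) ^ 2) := by
  exact cutoff_within_triangles_general k hθ0.le (by linarith) hσ (contDiff_etaBump incC incR_pos)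
    (hasCompactSupport_etaBump incC incR) (etaBump_nonneg incC incR)
    ⟨incC, incC_mem_refTri, (etaBump_self_pos incC incR_pos).ne'⟩

end
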